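/- arXiv:1907.01379 — 4 statements merged into one kernel-verified Lean document; each statement's English description precedes it below -/
import Mathlib

section
/- Let X be a compact metric space with a Borel probability measure μ, and let K : X × X → ℝ be a continuous symmetric kernel that is positive semi-definite in the finite-sum sense, i.e. Σ_{i=1}^{m} Σ_{j=1}^{m} c_i c_j K(x_i, x_j) ≥ 0 for all m ∈ ℕ, x_1, …, x_m ∈ X and c_1, …, c_m ∈ ℝ. Then the associated integral operator is positive semi-definite: for every f ∈ L²(X, μ), ∫_X ∫_X K(x, s) f(x) f(s) μ(dx) μ(ds) ≥ 0. -/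
open MeasureTheory

/-!
If `g` is a simple function, then the quadratic form of the kernel `K (g x, g s)` at `f` is the
finite double sum of `K (a, b)` weighted by the integrals of `f` over the fibres of `g`, hence
nonnegative.  Simple functions converging pointwise to the identity give kernels converging
pointwise to `K`, and dominated convergence, applied once in each variable, passes to the limit.
-/

open Filter Topology

/-- A kernel `K` is finitely positive semidefinite if all its finite quadratic forms
`∑ i, ∑ j, c i * c j * K (x i, x j)` are nonnegative. Symmetry is not part of the definition, and
the points `x i` may repeat. -/
def FinitelyPosSemidef {X : Type*} (K : X × X → ℝ) : Prop :=
  ∀ (m : ℕ) (x : Fin m → X) (c : Fin m → ℝ),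
    0 ≤ ∑ i : Fin m, ∑ j : Fin m, c i * c j * K (x i, x j)

/-- The integral operator `T_K` with kernel `K`, acting on functions rather than on `L²` classes;
its value at `x` is the junk value `0` if `s ↦ K (x, s) * f s` is not integrable. -/
noncomputable def integralOperator {X : Type*} [MeasurableSpace X] (μ : Measure X)
    (K : X × X → ℝ) (f : X → ℝ) (x : X) : ℝ :=
  ∫ s, K (x, s) * f s ∂μ

theorem FinitelyPosSemidef.sum_finset_nonneg {X : Type*} {K : X × X → ℝ}
    (hK : FinitelyPosSemidef K) (t : Finset X) (c : X → ℝ) :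
    0 ≤ ∑ a ∈ t, ∑ b ∈ t, c a * c b * K (a, b) := by
  let e := t.equivFin.symm
  calc 0 ≤ ∑ i, ∑ j, c (e i) * c (e j) * K (e i, e j) := hK _ (fun i ↦ e i) fun i ↦ c (e i)
    _ = ∑ a : t, ∑ b : t, c a * c b * K (a, b) :=
      Fintype.sum_equiv e _ _ fun i ↦ e.sum_comp fun b : t ↦ c (e i) * c b * K (e i, b)
    _ = ∑ a ∈ t, ∑ b ∈ t, c a * c b * K (a, b) := by
      simp only [← Finset.sum_coe_sort t]

section Integrals

variable {α : Type*} [MeasurableSpace α] {μ : Measure α} {f : α → ℝ}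

theorem integral_simpleFunc_comp_mul {β : Type*} (hf : Integrable f μ) (g : SimpleFunc α β)
    (h : β → ℝ) :
    ∫ s, h (g s) * f s ∂μ = ∑ b ∈ g.range, h b * ∫ s in g ⁻¹' {b}, f s ∂μ := by
  have hconst (b : β) : Set.EqOn (fun s ↦ h b * f s) (fun s ↦ h (g s) * f s) (g ⁻¹' {b}) := by
    rintro s rfl
    rfl
  have hfibre (b : β) : MeasurableSet (g ⁻¹' {b}) := g.measurableSet_fiber b
  have hcover : ⋃ b ∈ g.range, g ⁻¹' {b} = Set.univ := by
    ext s
    simp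
  calc ∫ s, h (g s) * f s ∂μ
      = ∑ b ∈ g.range, ∫ s in g ⁻¹' {b}, h (g s) * f s ∂μ := by
        rw [← setIntegral_univ, ← hcover]
        exact integral_biUnion_finset _ (fun b _ ↦ hfibre b)
          (fun a _ b _ hab ↦ Disjoint.preimage g (Set.disjoint_singleton.2 hab))
          fun b _ ↦ (hf.const_mul (h b)).integrableOn.congr_fun (hconst b) (hfibre b)
    _ = ∑ b ∈ g.range, h b * ∫ s in g ⁻¹' {b}, f s ∂μ :=
        Finset.sum_congr rfl fun b _ ↦ by
          rw [← setIntegral_congr_fun (hfibre b) (hconst b), integral_const_mul]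

theorem tendsto_integral_mul_of_bounded {F : ℕ → α → ℝ} {F₀ : α → ℝ} {C : ℝ}
    (hf : Integrable f μ) (hF_meas : ∀ n, AEStronglyMeasurable (F n) μ)
    (hF_bound : ∀ n x, ‖F n x‖ ≤ C) (hF_lim : ∀ x, Tendsto (F · x) atTop (𝓝 (F₀ x))) :
    Tendsto (fun n ↦ ∫ x, F n x * f x ∂μ) atTop (𝓝 (∫ x, F₀ x * f x ∂μ)) := by
  refine tendsto_integral_of_dominated_convergence (fun x ↦ C * ‖f x‖)
    (fun n ↦ (hF_meas n).mul hf.aestronglyMeasurable) (hf.norm.const_mul C)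
    (fun n ↦ .of_forall fun x ↦ ?_) (.of_forall fun x ↦ (hF_lim x).mul_const (f x))
  rw [norm_mul]
  gcongr
  exact hF_bound n x

theorem norm_integralOperator_le {K : α × α → ℝ} {C : ℝ} (hf : Integrable f μ)
    (hK_bound : ∀ z, ‖K z‖ ≤ C) (x : α) :
    ‖integralOperator μ K f x‖ ≤ C * ∫ s, ‖f s‖ ∂μ := by
  rw [← integral_const_mul]
  refine norm_integral_le_of_norm_le (hf.norm.const_mul C) (.of_forall fun s ↦ ?_)
  rw [norm_mul]
  gcongr
  exact hK_bound (x, s)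

theorem integral_integral_kernel_mul_mul (K : α × α → ℝ) :
    ∫ x, ∫ s, K (x, s) * f x * f s ∂μ ∂μ = ∫ x, integralOperator μ K f x * f x ∂μ := by
  simp only [integralOperator, ← integral_mul_const, mul_right_comm]

variable {X : Type*} {K : X × X → ℝ}

theorem stronglyMeasurable_integralOperator_comp_simpleFunc (g : SimpleFunc α X) :
    StronglyMeasurable (integralOperator μ (K ∘ Prod.map g g) f) :=
  (g.map fun a ↦ ∫ s, K (a, g s) * f s ∂μ).stronglyMeasurable

theorem FinitelyPosSemidef.integral_comp_simpleFunc_nonneg (hK : FinitelyPosSemidef K)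
    (hf : Integrable f μ) (g : SimpleFunc α X) :
    0 ≤ ∫ x, integralOperator μ (K ∘ Prod.map g g) f x * f x ∂μ := by
  let c (a : X) : ℝ := ∫ s in g ⁻¹' {a}, f s ∂μ
  have hT (x : α) : integralOperator μ (K ∘ Prod.map g g) f x
      = ∑ b ∈ g.range, K (g x, b) * c b :=
    integral_simpleFunc_comp_mul hf g fun b ↦ K (g x, b)
  calc 0 ≤ ∑ a ∈ g.range, ∑ b ∈ g.range, c a * c b * K (a, b) := hK.sum_finset_nonneg g.range c
    _ = ∑ a ∈ g.range, (∑ b ∈ g.range, K (a, b) * c b) * c a := by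
        refine Finset.sum_congr rfl fun a _ ↦ ?_
        rw [Finset.sum_mul]
        exact Finset.sum_congr rfl fun b _ ↦ by ring
    _ = ∫ x, (∑ b ∈ g.range, K (g x, b) * c b) * f x ∂μ :=
        (integral_simpleFunc_comp_mul hf g fun a ↦ ∑ b ∈ g.range, K (a, b) * c b).symm
    _ = ∫ x, integralOperator μ (K ∘ Prod.map g g) f x * f x ∂μ := by simp only [hT]

variable [TopologicalSpace X] {C : ℝ} {g : ℕ → SimpleFunc α X} {φ : α → X}

theorem tendsto_integralOperator_comp_simpleFunc (hK_cont : Continuous K)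
    (hK_bound : ∀ z, ‖K z‖ ≤ C) (hf : Integrable f μ)
    (hg : ∀ x, Tendsto (g · x) atTop (𝓝 (φ x))) (x : α) :
    Tendsto (fun n ↦ integralOperator μ (K ∘ Prod.map (g n) (g n)) f x) atTop
      (𝓝 (integralOperator μ (K ∘ Prod.map φ φ) f x)) :=
  tendsto_integral_mul_of_bounded hf
    (fun n ↦ ((g n).map fun b ↦ K (g n x, b)).aestronglyMeasurable)
    (fun _ _ ↦ hK_bound _)
    fun s ↦ (hK_cont.tendsto _).comp ((hg x).prodMk_nhds (hg s))

theorem FinitelyPosSemidef.integral_comp_stronglyMeasurable_nonneg (hK : FinitelyPosSemidef K)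
    (hK_cont : Continuous K) (hK_bound : ∀ z, ‖K z‖ ≤ C) (hf : Integrable f μ)
    (hφ : StronglyMeasurable φ) :
    0 ≤ ∫ x, integralOperator μ (K ∘ Prod.map φ φ) f x * f x ∂μ := by
  have hlim : Tendsto
      (fun n ↦ ∫ x, integralOperator μ (K ∘ Prod.map (hφ.approx n) (hφ.approx n)) f x * f x ∂μ)
      atTop (𝓝 (∫ x, integralOperator μ (K ∘ Prod.map φ φ) f x * f x ∂μ)) :=
    tendsto_integral_mul_of_bounded hf
      (fun n ↦ (stronglyMeasurable_integralOperator_comp_simpleFunc _).aestronglyMeasurable)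
      (fun n ↦ norm_integralOperator_le hf fun _ ↦ hK_bound _)
      (tendsto_integralOperator_comp_simpleFunc hK_cont hK_bound hf hφ.tendsto_approx)
  exact ge_of_tendsto' hlim fun n ↦ hK.integral_comp_simpleFunc_nonneg hf (hφ.approx n)

end Integrals

theorem finite_psd_kernel_implies_psd_operator_general
    {X : Type*} [TopologicalSpace X] [TopologicalSpace.PseudoMetrizableSpace X]
    [SecondCountableTopology X] [MeasurableSpace X] [OpensMeasurableSpace X] {μ : Measure X}
    {K : X × X → ℝ} {C : ℝ} {f : X → ℝ} (hK : FinitelyPosSemidef K) (hK_cont : Continuous K)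
    (hK_bound : ∀ z, ‖K z‖ ≤ C) (hf : Integrable f μ) :
    0 ≤ ∫ x, ∫ s, K (x, s) * f x * f s ∂μ ∂μ := by
  rw [integral_integral_kernel_mul_mul]
  exact hK.integral_comp_stronglyMeasurable_nonneg hK_cont hK_bound hf stronglyMeasurable_id

/-- **Theorem.**  Let `X` be a compact metric space with Borel probability
measure `μ`, and let `K : X × X → ℝ` be a continuous symmetric kernel that is
positive semi-definite in the finite-sum sense.  Then the associated integral
operator is positive semi-definite: `∫∫ K(x,s) f(x) f(s) dμ dμ ≥ 0` for every
`f ∈ L²(X, μ)`. -/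
theorem finite_psd_kernel_implies_psd_operator
    {X : Type*} [MetricSpace X] [CompactSpace X]
    [MeasurableSpace X] [BorelSpace X]
    (μ : Measure X) [IsProbabilityMeasure μ]
    (K : X × X → ℝ) (hKcont : Continuous K)
    (hKsymm : ∀ x s : X, K (x, s) = K (s, x))
    (hKpsd : ∀ (m : ℕ) (x : Fin m → X) (c : Fin m → ℝ),
      0 ≤ ∑ i : Fin m, ∑ j : Fin m, c i * c j * K (x i, x j)) :
    ∀ f : X → ℝ, MemLp f 2 μ →
      0 ≤ ∫ x, ∫ s, K (x, s) * f x * f s ∂μ ∂μ := by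
  intro f hf
  obtain ⟨C, hC⟩ := isCompact_univ.exists_bound_of_continuousOn hKcont.continuousOn
  exact finite_psd_kernel_implies_psd_operator_general hKpsd hKcont (fun z ↦ hC z trivial)
    (hf.integrable one_le_two)
end

section
/- Let (X, d) be a compact metric space with Borel probability measure μ. Suppose λ_1 ≥ λ_2 ≥ … ≥ 0 is a summable sequence of nonnegative reals and φ_1, φ_2, … : X → ℝ are continuous functions forming an orthonormal system in L²(X, μ), such that the series Σ_{i=1}^∞ λ_i φ_i(x) φ_i(s) converges uniformly on X × X (to a continuous kernel K̂). Then for every x ∈ X the sequence f(x) = (√λ_1 φ_1(x), √λ_2 φ_2(x), √λ_3 φ_3(x), …) belongs to ℓ², and the resulting map f : X → ℓ² is continuous. -/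
open MeasureTheory Filter

/-!
The Gram matrix of the coordinate sequences `f x = (√λᵢ φᵢ(x))ᵢ` is the kernel itself:
`⟪f x, f y⟫ = ∑ᵢ λᵢ φᵢ(x) φᵢ(y) = K̂(x, y)`, and its diagonal says that `f x` is square-summable.
Hence `‖f x - f y‖² = K̂(x, x) - 2 K̂(x, y) + K̂(y, y)`, which tends to `0` as `x → y`
because `K̂` is continuous.
-/

open scoped Topology

section InnerProductSpace

variable {𝕜 E : Type*} [RCLike 𝕜] [SeminormedAddCommGroup E] [InnerProductSpace 𝕜 E]

theorem tendsto_of_tendsto_norm_of_tendsto_inner {α : Type*} {l : Filter α} {u : α → E} {a : E}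
    (hnorm : Tendsto (fun t ↦ ‖u t‖) l (𝓝 ‖a‖))
    (hinner : Tendsto (fun t ↦ inner 𝕜 (u t) a) l (𝓝 (inner 𝕜 a a))) :
    Tendsto u l (𝓝 a) := by
  have hre : Tendsto (fun t ↦ RCLike.re (inner 𝕜 (u t) a)) l (𝓝 (RCLike.re (inner 𝕜 a a))) :=
    (RCLike.continuous_re.tendsto _).comp hinner
  have hsq : Tendsto (fun t ↦ ‖u t - a‖ ^ 2) l (𝓝 (‖a - a‖ ^ 2)) := by
    simp only [norm_sub_sq (𝕜 := 𝕜)]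
    exact ((hnorm.pow 2).sub (hre.const_mul 2)).add_const (‖a‖ ^ 2)
  rw [tendsto_iff_norm_sub_tendsto_zero]
  simpa using hsq.sqrt

theorem continuous_of_continuous_inner {X : Type*} [TopologicalSpace X] {f : X → E}
    (hf : Continuous fun p : X × X ↦ inner 𝕜 (f p.1) (f p.2)) : Continuous f := by
  have hnorm : Continuous fun x ↦ ‖f x‖ := by
    simp only [norm_eq_sqrt_re_inner (𝕜 := 𝕜)]
    exact (RCLike.continuous_re.comp (hf.comp (continuous_id.prodMk continuous_id))).sqrt
  have hinner (y : X) : Continuous fun x ↦ inner 𝕜 (f x) (f y) :=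
    hf.comp (continuous_id.prodMk continuous_const)
  exact continuous_iff_continuousAt.2 fun y ↦
    tendsto_of_tendsto_norm_of_tendsto_inner (hnorm.tendsto y) ((hinner y).tendsto y)

end InnerProductSpace

theorem memℓp_two_of_tendsto_sum_norm_sq {E : ℕ → Type*} [∀ i, NormedAddCommGroup (E i)]
    {v : ∀ i, E i} {r : ℝ}
    (hv : Tendsto (fun N ↦ ∑ i ∈ Finset.range N, ‖v i‖ ^ 2) atTop (𝓝 r)) : Memℓp v 2 := by
  have hsummable : Summable fun i ↦ ‖v i‖ ^ 2 :=
    ((hasSum_iff_tendsto_nat_of_nonneg (fun i ↦ sq_nonneg ‖v i‖) r).2 hv).summable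
  exact memℓp_gen (by simpa only [ENNReal.toReal_ofNat, Real.rpow_ofNat] using hsummable)

section HilbertSum

variable {𝕜 : Type*} [RCLike 𝕜] {G : ℕ → Type*} [∀ i, NormedAddCommGroup (G i)]
  [∀ i, InnerProductSpace 𝕜 (G i)]

theorem inner_eq_of_tendsto_sum_inner {v w : lp G 2} {c : 𝕜}
    (h : Tendsto (fun N ↦ ∑ i ∈ Finset.range N, inner 𝕜 (v i) (w i)) atTop (𝓝 c)) :
    inner 𝕜 v w = c :=
  tendsto_nhds_unique (lp.hasSum_inner v w).tendsto_sum_nat h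

theorem continuous_of_tendsto_sum_inner {X : Type*} [TopologicalSpace X] {f : X → lp G 2}
    {K : X × X → 𝕜} (hK : Continuous K)
    (hlim : ∀ x y, Tendsto (fun N ↦ ∑ i ∈ Finset.range N, inner 𝕜 (f x i) (f y i)) atTop
      (𝓝 (K (x, y)))) :
    Continuous f :=
  continuous_of_continuous_inner (𝕜 := 𝕜) <|
    hK.congr fun p ↦ (inner_eq_of_tendsto_sum_inner (hlim p.1 p.2)).symm

end HilbertSum

theorem mds_embedding_continuous_general {X : Type*} [TopologicalSpace X]
    (lam : ℕ → ℝ) (hnonneg : ∀ i, 0 ≤ lam i) (φ : ℕ → X → ℝ)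
    (Khat : X × X → ℝ) (hKhat : Continuous Khat)
    (hlim : ∀ p : X × X, Tendsto
      (fun N : ℕ ↦ ∑ i ∈ Finset.range N, lam i * φ i p.1 * φ i p.2) atTop (𝓝 (Khat p))) :
    ∃ hmem : ∀ x : X, Memℓp (fun i : ℕ ↦ √(lam i) * φ i x) 2,
      Continuous (fun x : X ↦
        (⟨fun i : ℕ ↦ √(lam i) * φ i x, hmem x⟩ : lp (fun _ : ℕ ↦ ℝ) 2)) := by
  have inner_coord (i : ℕ) (x y : X) :
      inner ℝ (√(lam i) * φ i x) (√(lam i) * φ i y) = lam i * φ i x * φ i y := by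
    rw [real_inner_comm, RCLike.inner_apply, conj_trivial, mul_mul_mul_comm,
      Real.mul_self_sqrt (hnonneg i), mul_assoc]
  have norm_sq_coord (i : ℕ) (x : X) : ‖√(lam i) * φ i x‖ ^ 2 = lam i * φ i x * φ i x := by
    rw [← real_inner_self_eq_norm_sq, inner_coord]
  refine ⟨fun x ↦ memℓp_two_of_tendsto_sum_norm_sq (r := Khat (x, x)) ?_,
    continuous_of_tendsto_sum_inner (𝕜 := ℝ) hKhat fun x y ↦ ?_⟩
  · simpa only [norm_sq_coord] using hlim (x, x)
  · simpa only [inner_coord] using hlim (x, y)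

/-- **Theorem (continuity of the MDS embedding).**  Given eigendata
`λ 0 ≥ λ 1 ≥ … ≥ 0` (summable) and continuous orthonormal eigenfunctions
`φ i`, with `∑ᵢ λᵢ φᵢ(x) φᵢ(s)` converging uniformly on `X × X` to a kernel
`K̂`, the sequence `(√λᵢ φᵢ(x))ᵢ` is square-summable for each `x` and the
resulting MDS embedding `f : X → ℓ²` is continuous. -/
theorem mds_embedding_continuous
    {X : Type*} [MetricSpace X] [CompactSpace X]
    [MeasurableSpace X] [BorelSpace X]
    (μ : Measure X) [IsProbabilityMeasure μ]
    (lam : ℕ → ℝ) (hnonneg : ∀ i, 0 ≤ lam i)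
    (hdec : ∀ i, lam (i + 1) ≤ lam i) (hsum : Summable lam)
    (φ : ℕ → X → ℝ) (hcont : ∀ i, Continuous (φ i))
    (hL2 : ∀ i, MemLp (φ i) 2 μ)
    (hortho : ∀ i j : ℕ, ∫ x, φ i x * φ j x ∂μ = if i = j then 1 else 0)
    (Khat : X × X → ℝ)
    (hunif : TendstoUniformly
      (fun (N : ℕ) (p : X × X) => ∑ i ∈ Finset.range N, lam i * φ i p.1 * φ i p.2)
      Khat atTop) :
    ∃ hmem : ∀ x : X, Memℓp (fun i : ℕ => Real.sqrt (lam i) * φ i x) 2,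
      Continuous (fun x : X =>
        (⟨fun i : ℕ => Real.sqrt (lam i) * φ i x, hmem x⟩ : lp (fun _ : ℕ => ℝ) 2)) :=
  mds_embedding_continuous_general lam hnonneg φ Khat
    (hunif.continuous (.of_forall fun N ↦ by fun_prop)) hunif.tendsto_at
end

section
/- Let (X, d, μ) be a metric measure space (a compact metric space with a Borel probability measure) with d ∈ L²(X × X, μ ⊗ μ) and supp(μ) = X. Define K_A(x, s) = -(1/2) d(x, s)² and the doubly centered kernel K_B(x, s) = K_A(x, s) - ∫_X K_A(w, s) μ(dw) - ∫_X K_A(x, z) μ(dz) + ∫_X ∫_X K_A(w, z) μ(dw) μ(dz). Then X is Euclidean — i.e. there exists an isometric embedding of (X, d) into the Hilbert space ℓ² of square-summable real sequences — if and only if the integral operator T_{K_B} on L²(X, μ) is positive semi-definite, i.e. ∫_X ∫_X K_B(x, s) f(x) f(s) μ(dx) μ(ds) ≥ 0 for every f ∈ L²(X, μ). -/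
open MeasureTheory

/-!
Double centering replaces `-d² / 2` by the Gram kernel of the centered embedding: if `d` is the
distance induced by `F : X → H`, then `K_B x s = ⟪F x - m, F s - m⟫` with `m = ∫ F`, whose quadratic
form at `f` is `‖∫ f • (F - m)‖²`. Conversely `d ∈ L²` makes `K_B` continuous, so testing the
quadratic form on combinations of normalized indicators of shrinking balls, which concentrate at
points because `μ` has full support, shows that `K_B` is a positive semidefinite matrix on `X`.
Moore's theorem then gives a feature map, and it is isometric because double centering does not
change `K x x + K s s - 2 K x s`. Finally, full support of a finite measure forces `X` to be
separable, so the feature space fits into `ℓ²`.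
-/

open Filter Function Metric Set TopologicalSpace
open scoped ENNReal InnerProductSpace NNReal Topology

universe u

/-- The kernel `K_B` obtained from `K = K_A` by subtracting the mean of each column and of each row
and adding back the total mean. -/
noncomputable def doublyCentered {X : Type*} [MeasurableSpace X] (μ : Measure X)
    (K : X → X → ℝ) (x s : X) : ℝ :=
  K x s - (∫ w, K w s ∂μ) - (∫ z, K x z ∂μ) + ∫ w, ∫ z, K w z ∂μ ∂μ

/-- Positive semidefiniteness of the integral operator `T_K` on `L²(μ)`, expressed through its
quadratic form so that it makes sense without knowing that `T_K` maps `L²(μ)` to itself. -/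
def IsPosSemidefOnL2 {X : Type*} [MeasurableSpace X] (μ : Measure X) (K : X → X → ℝ) : Prop :=
  ∀ f : X → ℝ, MemLp f 2 μ → 0 ≤ ∫ x, ∫ s, K x s * f x * f s ∂μ ∂μ

section Gram

variable {X E : Type*} [MeasurableSpace X] {μ : Measure X} [NormedAddCommGroup E]
  [InnerProductSpace ℝ E] [CompleteSpace E]

theorem integral_integral_inner_self {g : X → E} (hg : Integrable g μ) :
    ∫ x, ∫ s, ⟪g x, g s⟫_ℝ ∂μ ∂μ = ‖∫ x, g x ∂μ‖ ^ 2 := by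
  simp_rw [integral_inner hg, real_inner_comm (∫ s, g s ∂μ)]
  rw [integral_inner hg, real_inner_self_eq_norm_sq]

theorem isPosSemidefOnL2_inner {F : X → E} (hF : MemLp F 2 μ) :
    IsPosSemidefOnL2 μ fun x s => ⟪F x, F s⟫_ℝ := by
  intro f hf
  have hfF : Integrable (fun x => f x • F x) μ := memLp_one_iff_integrable.1 (hF.smul hf)
  calc 0 ≤ ‖∫ x, f x • F x ∂μ‖ ^ 2 := by positivity
    _ = ∫ x, ∫ s, ⟪f x • F x, f s • F s⟫_ℝ ∂μ ∂μ := (integral_integral_inner_self hfF).symm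
    _ = ∫ x, ∫ s, ⟪F x, F s⟫_ℝ * f x * f s ∂μ ∂μ := by
      simp_rw [real_inner_smul_left, real_inner_smul_right]
      congr! 4; ring

theorem doublyCentered_norm_sub_sq_of_integral_eq_zero [IsProbabilityMeasure μ] {G : X → E}
    (hG : MemLp G 2 μ) (hG₀ : ∫ x, G x ∂μ = 0) :
    doublyCentered μ (fun x s => -(1 / 2) * ‖G x - G s‖ ^ 2) = fun x s => ⟪G x, G s⟫_ℝ := by
  have hG₁ : Integrable G μ := hG.integrable one_le_two
  have hG₂ : Integrable (fun x => ‖G x‖ ^ 2) μ := hG.integrable_norm_pow two_ne_zero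
  set V := ∫ x, ‖G x‖ ^ 2 ∂μ
  have expand (x s : X) :
      -(1 / 2) * ‖G x - G s‖ ^ 2 = ⟪G x, G s⟫_ℝ - (1 / 2) * (‖G x‖ ^ 2 + ‖G s‖ ^ 2) := by
    rw [norm_sub_sq_real]
    ring
  have hpair (x : X) : Integrable (fun z => (1 / 2) * (‖G x‖ ^ 2 + ‖G z‖ ^ 2)) μ :=
    ((integrable_const _).add hG₂).const_mul _
  have row (x : X) : ∫ z, -(1 / 2) * ‖G x - G z‖ ^ 2 ∂μ = -(1 / 2) * (‖G x‖ ^ 2 + V) := by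
    simp_rw [expand]
    rw [integral_sub (hG₁.const_inner _) (hpair x), integral_inner hG₁, hG₀,
      integral_const_mul, integral_add (integrable_const _) hG₂]
    simp only [inner_zero_right, integral_const, probReal_univ, one_smul, V]
    ring
  have total : ∫ w, ∫ z, -(1 / 2) * ‖G w - G z‖ ^ 2 ∂μ ∂μ = -V := by
    simp_rw [row]
    rw [integral_const_mul, integral_add hG₂ (integrable_const _)]
    simp only [integral_const, probReal_univ, one_smul, V]
    ring
  ext x s
  have column : ∫ w, -(1 / 2) * ‖G w - G s‖ ^ 2 ∂μ = -(1 / 2) * (‖G s‖ ^ 2 + V) := by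
    simp_rw [norm_sub_rev _ (G s), row]
  rw [doublyCentered, total, row, column, expand]
  ring

theorem doublyCentered_norm_sub_sq [IsProbabilityMeasure μ] {F : X → E} (hF : MemLp F 2 μ) :
    doublyCentered μ (fun x s => -(1 / 2) * ‖F x - F s‖ ^ 2) =
      fun x s => ⟪F x - ∫ y, F y ∂μ, F s - ∫ y, F y ∂μ⟫_ℝ := by
  have hF₀ : ∫ x, (F x - ∫ y, F y ∂μ) ∂μ = 0 := by
    rw [integral_sub (hF.integrable one_le_two) (integrable_const _)]
    simp
  simpa using doublyCentered_norm_sub_sq_of_integral_eq_zero (hF.sub (memLp_const _)) hF₀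

end Gram

section Centering

variable {X : Type*} [MeasurableSpace X] {μ : Measure X} {K : X → X → ℝ}

theorem doublyCentered_comm (hK : ∀ x s, K x s = K s x) (x s : X) :
    doublyCentered μ K x s = doublyCentered μ K s x := by
  simp_rw [doublyCentered, hK _ s, hK _ x]
  ring

theorem doublyCentered_self_add_self_sub (hK : ∀ x s, K x s = K s x) (x s : X) :
    doublyCentered μ K x x + doublyCentered μ K s s - 2 * doublyCentered μ K x s =
      K x x + K s s - 2 * K x s := by
  simp_rw [doublyCentered, hK _ s, hK _ x]
  ring

theorem continuous_doublyCentered [TopologicalSpace X] (hK : ∀ x s, K x s = K s x)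
    (hcont : Continuous (uncurry K)) (hint : Continuous fun x => ∫ z, K x z ∂μ) :
    Continuous (uncurry (doublyCentered μ K)) := by
  have : uncurry (doublyCentered μ K) = fun p : X × X =>
      uncurry K p - (∫ z, K p.2 z ∂μ) - (∫ z, K p.1 z ∂μ) + ∫ w, ∫ z, K w z ∂μ ∂μ := by
    ext ⟨x, s⟩
    simp_rw [uncurry_apply_pair, doublyCentered, hK _ s]
  rw [this]
  exact ((hcont.sub (hint.comp continuous_snd)).sub (hint.comp continuous_fst)).add
    continuous_const

end Centering

section SquareIntegrable

variable {X : Type*} [PseudoMetricSpace X] [MeasurableSpace X] {μ : Measure X}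

theorem secondCountableTopology_of_isOpenPosMeasure [OpensMeasurableSpace X]
    (μ : Measure X) [SFinite μ] [μ.IsOpenPosMeasure] : SecondCountableTopology X := by
  refine secondCountable_of_almost_dense_set fun ε hε => ?_
  lift ε to ℝ≥0 using hε.le
  have hε₂ : 0 < (ε : ℝ) / 2 := by positivity
  obtain ⟨N, hN⟩ : ∃ N : Set X, Maximal (fun N => N ⊆ univ ∧ IsSeparated ε N) N :=
    zorn_subset {N : Set X | N ⊆ univ ∧ IsSeparated ε N} fun c hc hchain =>
      ⟨⋃₀ c, ⟨subset_univ _, (pairwise_sUnion hchain.directedOn).2 fun N hN => (hc hN).2⟩,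
        fun _ => subset_sUnion_of_mem⟩
  have disjoint_balls : Pairwise (Disjoint on fun x : N => ball (x : X) (ε / 2)) := by
    intro x y hxy
    refine ball_disjoint_ball ?_
    have : (ε : ℝ≥0∞) < edist (x : X) y := hN.prop.2 x.2 y.2 (Subtype.coe_injective.ne hxy)
    rw [edist_nndist, ENNReal.coe_lt_coe, ← NNReal.coe_lt_coe, coe_nndist] at this
    linarith
  have hcount := Measure.countable_meas_pos_of_disjoint_iUnion (μ := μ)
    (fun x : N => measurableSet_ball) disjoint_balls
  simp only [measure_ball_pos μ _ hε₂, ofPred_true, countable_univ_iff] at hcount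
  refine ⟨N, hcount, fun x => ?_⟩
  obtain ⟨y, hy, hxy⟩ := IsCover.of_maximal_isSeparated hN (mem_univ x)
  refine ⟨y, hy, ?_⟩
  rwa [dist_nndist, NNReal.coe_le_coe, ← ENNReal.coe_le_coe, ← edist_nndist]

theorem memLp_of_lipschitzWith {E : Type*} [NormedAddCommGroup E] [OpensMeasurableSpace X]
    [SecondCountableTopology X] [IsFiniteMeasure μ] {p : ℝ≥0∞} {C : ℝ≥0} {F : X → E}
    (hF : LipschitzWith C F) {x : X} (hx : MemLp (dist x) p μ) : MemLp F p μ := by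
  refine ((memLp_const ‖F x‖).add (hx.const_mul (C : ℝ))).mono'
    hF.continuous.aestronglyMeasurable (.of_forall fun z => ?_)
  calc ‖F z‖ ≤ ‖F x‖ + ‖F x - F z‖ := norm_le_norm_add_norm_sub _ _
    _ ≤ ‖F x‖ + C * dist x z := by
      rw [← dist_eq_norm]; gcongr; exact hF.dist_le_mul x z

theorem memLp_dist_of_memLp_prod [OpensMeasurableSpace X] [SecondCountableTopology X]
    [IsFiniteMeasure μ] {p : ℝ≥0∞} (hp₀ : p ≠ 0) (hp : p ≠ ∞)
    (hd : MemLp (fun q : X × X => dist q.1 q.2) p (μ.prod μ)) (x : X) : MemLp (dist x) p μ := by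
  rcases eq_zero_or_neZero μ with rfl | _
  · simp
  obtain ⟨x₀, hx₀⟩ := (hd.integrable_norm_rpow hp₀ hp).prod_right_ae.exists
  have hx₀' : MemLp (dist x₀) p μ := (integrable_norm_rpow_iff
    (continuous_const.dist continuous_id).aestronglyMeasurable hp₀ hp).1 hx₀
  exact memLp_of_lipschitzWith (F := dist x) (LipschitzWith.dist_right x) hx₀'

theorem continuous_integral_dist_sq [OpensMeasurableSpace X] [IsFiniteMeasure μ]
    (hd : ∀ x, MemLp (dist x) 2 μ) :
    Continuous fun x => ∫ z, dist x z ^ 2 ∂μ := by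
  refine continuous_iff_continuousAt.2 fun x => ?_
  have hbound : Integrable (fun z => (1 + dist x z) ^ 2) μ :=
    ((memLp_const (1 : ℝ)).add (hd x)).integrable_sq
  refine continuousAt_of_dominated (.of_forall fun y => ?_) ?_ hbound (.of_forall fun z => ?_)
  · exact (by fun_prop : Continuous fun z => dist y z ^ 2).aestronglyMeasurable
  · filter_upwards [ball_mem_nhds x one_pos] with y hy
    refine .of_forall fun z => ?_
    rw [Real.norm_of_nonneg (by positivity)]
    gcongr
    linarith [dist_triangle y x z, mem_ball.1 hy]
  · fun_prop

end SquareIntegrable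

theorem tendsto_closedBall_nhdsGT_smallSets {X : Type*} [PseudoMetricSpace X] (x : X) :
    Tendsto (closedBall x) (𝓝[>] 0) (𝓝 x).smallSets :=
  (tendsto_closedBall_smallSets x).mono_left nhdsWithin_le_nhds

theorem tendsto_setAverage_closedBall {X E : Type*} [PseudoMetricSpace X] [MeasurableSpace X]
    [OpensMeasurableSpace X] {μ : Measure X} [IsLocallyFiniteMeasure μ] [μ.IsOpenPosMeasure]
    [NormedAddCommGroup E] [NormedSpace ℝ E] [CompleteSpace E] {g : X → E} {x : X}
    (hg : ContinuousAt g x) (hgm : StronglyMeasurableAtFilter g (𝓝 x) μ) :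
    Tendsto (fun r => ⨍ y in closedBall x r, g y ∂μ) (𝓝[>] 0) (𝓝 (g x)) := by
  have hball := tendsto_closedBall_nhdsGT_smallSets x
  have h := (hg.integral_sub_linear_isLittleO_ae hgm hball).tendsto_inv_smul_nhds_zero
  rw [← tendsto_sub_nhds_zero_iff]
  refine h.congr' ?_
  have hfin : ∀ᶠ r in 𝓝[>] (0 : ℝ), μ (closedBall x r) < ∞ :=
    hball.eventually (μ.finiteAt_nhds x).eventually
  filter_upwards [hfin, self_mem_nhdsWithin] with r hr (hr₀ : 0 < r)
  have : μ.real (closedBall x r) ≠ 0 :=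
    (ENNReal.toReal_pos (measure_closedBall_pos μ x hr₀).ne' hr.ne).ne'
  rw [smul_sub, inv_smul_smul₀ this, setAverage_eq]

theorem integral_integral_mul_sum_mul_sum {X ι : Type*} [MeasurableSpace X] {μ : Measure X}
    [SFinite μ] {K : X → X → ℝ} (t : Finset ι) (c : ι → ℝ) {φ : ι → X → ℝ}
    (hφ : ∀ i ∈ t, ∀ j ∈ t,
      Integrable (fun p : X × X => K p.1 p.2 * (φ i p.1 * φ j p.2)) (μ.prod μ)) :
    ∫ x, ∫ s, K x s * (∑ i ∈ t, c i * φ i x) * (∑ j ∈ t, c j * φ j s) ∂μ ∂μ =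
      ∑ i ∈ t, ∑ j ∈ t, c i * c j *
        ∫ p : X × X, K p.1 p.2 * (φ i p.1 * φ j p.2) ∂μ.prod μ := by
  have expand (p : X × X) :
      K p.1 p.2 * (∑ i ∈ t, c i * φ i p.1) * (∑ j ∈ t, c j * φ j p.2) =
        ∑ i ∈ t, ∑ j ∈ t, c i * c j * (K p.1 p.2 * (φ i p.1 * φ j p.2)) := by
    rw [mul_assoc, Finset.sum_mul_sum, Finset.mul_sum]
    refine Finset.sum_congr rfl fun i _ => ?_
    rw [Finset.mul_sum]
    exact Finset.sum_congr rfl fun j _ => by ring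
  have hint : ∀ i ∈ t, ∀ j ∈ t, Integrable
      (fun p : X × X => c i * c j * (K p.1 p.2 * (φ i p.1 * φ j p.2))) (μ.prod μ) :=
    fun i hi j hj => (hφ i hi j hj).const_mul _
  have hrow : ∀ i ∈ t, Integrable
      (fun p : X × X => ∑ j ∈ t, c i * c j * (K p.1 p.2 * (φ i p.1 * φ j p.2))) (μ.prod μ) :=
    fun i hi => integrable_finsetSum _ (hint i hi)
  have hsum := integrable_finsetSum t hrow
  rw [← integral_prod (fun p : X × X =>
    K p.1 p.2 * (∑ i ∈ t, c i * φ i p.1) * (∑ j ∈ t, c j * φ j p.2)) (by simpa only [expand])]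
  simp_rw [expand]
  rw [integral_finsetSum _ hrow]
  refine Finset.sum_congr rfl fun i hi => ?_
  rw [integral_finsetSum _ (hint i hi)]
  simp_rw [integral_const_mul]

section Localization

variable {X : Type*} [PseudoMetricSpace X] [MeasurableSpace X] {μ : Measure X}

/-- The density of the uniform law on `closedBall x r`, an approximation of the Dirac mass at `x`
as `r → 0`. It is identically zero when the ball has measure `0` or `∞`. -/
noncomputable def ballDensity (μ : Measure X) (r : ℝ) (x : X) : X → ℝ :=
  (closedBall x r).indicator fun _ => (μ.real (closedBall x r))⁻¹

theorem mul_ballDensity_mul_ballDensity [SFinite μ] (g : X × X → ℝ) (r : ℝ) (x y : X) :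
    (fun p => g p * (ballDensity μ r x p.1 * ballDensity μ r y p.2)) =
      (closedBall (x, y) r).indicator
        fun p => ((μ.prod μ).real (closedBall (x, y) r))⁻¹ * g p := by
  ext p
  rw [← closedBall_prod_same, measureReal_prod_prod, mul_inv]
  by_cases h₁ : p.1 ∈ closedBall x r <;> by_cases h₂ : p.2 ∈ closedBall y r <;>
    simp [ballDensity, indicator, mem_prod, -mem_closedBall, h₁, h₂, mul_comm]

variable [OpensMeasurableSpace X]

theorem eventually_memLp_ballDensity [IsLocallyFiniteMeasure μ] (x : X) (p : ℝ≥0∞) :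
    ∀ᶠ r in 𝓝[>] 0, MemLp (ballDensity μ r x) p μ := by
  filter_upwards [(tendsto_closedBall_nhdsGT_smallSets x).eventually
    (μ.finiteAt_nhds x).eventually] with r hr
  exact memLp_indicator_const p measurableSet_closedBall _ (.inr hr.ne)

variable [SecondCountableTopology X]

theorem integral_mul_ballDensity_mul_ballDensity [SFinite μ] (g : X × X → ℝ) (r : ℝ) (x y : X) :
    ∫ p, g p * (ballDensity μ r x p.1 * ballDensity μ r y p.2) ∂μ.prod μ =
      ⨍ p in closedBall (x, y) r, g p ∂μ.prod μ := by
  rw [mul_ballDensity_mul_ballDensity, integral_indicator measurableSet_closedBall,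
    integral_const_mul, setAverage_eq, smul_eq_mul]

variable [IsLocallyFiniteMeasure μ]

theorem eventually_integrable_mul_ballDensity {g : X × X → ℝ} (hg : Continuous g) (x y : X) :
    ∀ᶠ r in 𝓝[>] 0, Integrable
      (fun p => g p * (ballDensity μ r x p.1 * ballDensity μ r y p.2)) (μ.prod μ) := by
  have hg' : IntegrableAtFilter g (𝓝 (x, y)) (μ.prod μ) := hg.locallyIntegrable (x, y)
  filter_upwards [(tendsto_closedBall_nhdsGT_smallSets (x, y)).eventually hg'.eventually] with r hr
  rw [mul_ballDensity_mul_ballDensity, integrable_indicator_iff measurableSet_closedBall]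
  exact hr.const_mul _

theorem tendsto_integral_mul_ballDensity [μ.IsOpenPosMeasure] {g : X × X → ℝ} (hg : Continuous g)
    (x y : X) :
    Tendsto (fun r => ∫ p, g p * (ballDensity μ r x p.1 * ballDensity μ r y p.2) ∂μ.prod μ)
      (𝓝[>] 0) (𝓝 (g (x, y))) := by
  simp_rw [integral_mul_ballDensity_mul_ballDensity]
  exact tendsto_setAverage_closedBall hg.continuousAt
    hg.aestronglyMeasurable.stronglyMeasurableAtFilter

theorem posSemidef_of_isPosSemidefOnL2 [μ.IsOpenPosMeasure] {K : X → X → ℝ}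
    (hcont : Continuous (uncurry K)) (hcomm : ∀ x y, K x y = K y x) (hK : IsPosSemidefOnL2 μ K) :
    (Matrix.of K).PosSemidef := by
  refine ⟨Matrix.IsHermitian.ext fun x y => hcomm y x, fun c => ?_⟩
  have htendsto : Tendsto (fun r => ∑ x ∈ c.support, ∑ y ∈ c.support, c x * c y *
      ∫ p, uncurry K p * (ballDensity μ r x p.1 * ballDensity μ r y p.2) ∂μ.prod μ) (𝓝[>] 0)
      (𝓝 (∑ x ∈ c.support, ∑ y ∈ c.support, c x * c y * K x y)) :=
    tendsto_finsetSum _ fun x _ => tendsto_finsetSum _ fun y _ =>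
      (tendsto_integral_mul_ballDensity hcont x y).const_mul _
  have hmem : ∀ᶠ r in 𝓝[>] 0, ∀ x ∈ c.support, MemLp (ballDensity μ r x) 2 μ :=
    (eventually_all_finset _).2 fun x _ => eventually_memLp_ballDensity x 2
  have hint : ∀ᶠ r in 𝓝[>] 0, ∀ x ∈ c.support, ∀ y ∈ c.support, Integrable
      (fun p => uncurry K p * (ballDensity μ r x p.1 * ballDensity μ r y p.2)) (μ.prod μ) :=
    (eventually_all_finset _).2 fun x _ => (eventually_all_finset _).2 fun y _ =>
      eventually_integrable_mul_ballDensity hcont x y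
  have hlim : 0 ≤ ∑ x ∈ c.support, ∑ y ∈ c.support, c x * c y * K x y := by
    refine ge_of_tendsto htendsto ?_
    filter_upwards [hmem, hint] with r hr hr'
    refine (hK _ (memLp_finsetSum _ fun x hx => (hr x hx).const_mul (c x))).trans_eq ?_
    exact integral_integral_mul_sum_mul_sum _ _ hr'
  simpa [Finsupp.sum, mul_right_comm] using hlim

end Localization

section Embedding

theorem countable_of_orthonormal {𝕜 E ι : Type*} [RCLike 𝕜] [NormedAddCommGroup E]
    [InnerProductSpace 𝕜 E] [SeparableSpace E] {v : ι → E} (hv : Orthonormal 𝕜 v) :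
    Countable ι := by
  have one_lt_dist {i j : ι} (hij : i ≠ j) : 1 < dist (v i) (v j) := by
    have : dist (v i) (v j) ^ 2 = 2 := by
      rw [dist_eq_norm, @norm_sub_sq 𝕜, hv.1, hv.1, hv.2 hij]
      norm_num
    nlinarith [dist_nonneg (x := v i) (y := v j)]
  refine Pairwise.countable_of_isOpen_disjoint (s := fun i => ball (v i) (1 / 2))
    (fun i j hij => ball_disjoint_ball ?_) (fun _ => isOpen_ball)
    fun i => nonempty_ball.2 one_half_pos
  linarith [one_lt_dist hij]

theorem nonempty_linearIsometry_l2 (𝕜 H : Type*) [RCLike 𝕜] [NormedAddCommGroup H]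
    [InnerProductSpace 𝕜 H] [CompleteSpace H] [SeparableSpace H] :
    Nonempty (H →ₗᵢ[𝕜] lp (fun _ : ℕ => 𝕜) 2) := by
  obtain ⟨w, b, -⟩ := exists_hilbertBasis 𝕜 H
  have : Countable w := countable_of_orthonormal b.orthonormal
  obtain ⟨e, he⟩ := exists_injective_nat w
  let B : HilbertBasis ℕ 𝕜 (lp (fun _ : ℕ => 𝕜) 2) := .ofRepr (.refl 𝕜 _)
  have hBe : Orthonormal 𝕜 (B ∘ e) := B.orthonormal.comp e he
  exact ⟨hBe.orthogonalFamily.linearIsometry.comp b.repr.toLinearIsometry⟩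

theorem exists_l2_inner_eq {X H : Type*} [TopologicalSpace X] [SeparableSpace X]
    [NormedAddCommGroup H] [InnerProductSpace ℝ H] [CompleteSpace H] {G : X → H}
    (hG : Continuous G) :
    ∃ F : X → lp (fun _ : ℕ => ℝ) 2, ∀ x y, ⟪F x, F y⟫_ℝ = ⟪G x, G y⟫_ℝ := by
  let V := (Submodule.span ℝ (range G)).topologicalClosure
  have : SeparableSpace V := ((isSeparable_range hG).span (R := ℝ)).closure.separableSpace
  have hGV (x : X) : G x ∈ V :=
    Submodule.le_topologicalClosure _ (Submodule.subset_span (mem_range_self x))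
  obtain ⟨Φ⟩ := nonempty_linearIsometry_l2 ℝ V
  exact ⟨fun x => Φ ⟨G x, hGV x⟩, fun x y => Φ.inner_map_map ⟨G x, hGV x⟩ ⟨G y, hGV y⟩⟩

theorem posSemidef_smul_id {X : Type*} {K : X → X → ℝ} (hK : (Matrix.of K).PosSemidef) :
    (Matrix.of fun x y => K x y • ContinuousLinearMap.id ℝ ℝ).PosSemidef := by
  have hK_comm (x y : X) : K x y = K y x := by simpa using hK.1.apply y x
  have hiff := (RKHS.posSemidef_tfae
    (K := Matrix.of fun x y => K x y • ContinuousLinearMap.id ℝ ℝ)).out 0 2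
  refine hiff.2 ⟨?_, fun v => ?_⟩
  · ext x y
    have : star (ContinuousLinearMap.id ℝ ℝ) = .id ℝ ℝ := star_one (ℝ →L[ℝ] ℝ)
    simp [this, hK_comm y x]
  · refine (hK.2 v).trans_eq ?_
    simp [hK_comm, mul_comm]

theorem exists_feature_map {X : Type u} {K : X → X → ℝ} (hK : (Matrix.of K).PosSemidef) :
    ∃ (H : Type u) (_ : NormedAddCommGroup H) (_ : InnerProductSpace ℝ H) (_ : CompleteSpace H)
      (G : X → H), ∀ x y, ⟪G x, G y⟫_ℝ = K x y := by
  have : Fact _ := ⟨posSemidef_smul_id hK⟩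
  let H := RKHS.OfKernel (Matrix.of fun x y => K x y • ContinuousLinearMap.id ℝ ℝ)
  refine ⟨H, inferInstance, inferInstance, inferInstance, fun x => RKHS.kerFun H x 1,
    fun x y => ?_⟩
  have hK_comm : K y x = K x y := by simpa using hK.1.apply x y
  have := RKHS.kernel_inner H y x (1 : ℝ) (1 : ℝ)
  rw [RKHS.OfKernel.kernel_ofKernel] at this
  rw [← this]
  simp [hK_comm]

theorem isometry_of_inner_eq {X E : Type*} [PseudoMetricSpace X] [NormedAddCommGroup E]
    [InnerProductSpace ℝ E] {K : X → X → ℝ} {G : X → E} (hG : ∀ x y, ⟪G x, G y⟫_ℝ = K x y)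
    (hd : ∀ x y, K x x + K y y - 2 * K x y = dist x y ^ 2) : Isometry G := by
  refine .of_dist_eq fun x y => (sq_eq_sq₀ dist_nonneg dist_nonneg).1 ?_
  rw [dist_eq_norm, norm_sub_sq_real, ← real_inner_self_eq_norm_sq, ← real_inner_self_eq_norm_sq,
    hG, hG, hG, ← hd]
  ring

theorem exists_isometry_l2 {X : Type*} [PseudoMetricSpace X] [SeparableSpace X]
    {K : X → X → ℝ} (hK : (Matrix.of K).PosSemidef)
    (hd : ∀ x y, K x x + K y y - 2 * K x y = dist x y ^ 2) :
    ∃ F : X → lp (fun _ : ℕ => ℝ) 2, Isometry F := by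
  obtain ⟨H, _, _, _, G, hG⟩ := exists_feature_map hK
  obtain ⟨F, hF⟩ := exists_l2_inner_eq (isometry_of_inner_eq hG hd).continuous
  exact ⟨F, isometry_of_inner_eq (fun x y => (hF x y).trans (hG x y)) hd⟩

end Embedding

theorem metric_measure_space_euclidean_iff_posSemidef_general
    {X : Type*} [PseudoMetricSpace X]
    [MeasurableSpace X] [OpensMeasurableSpace X]
    (μ : Measure X) [IsProbabilityMeasure μ] [μ.IsOpenPosMeasure]
    (hdL2 : MemLp (fun p : X × X => dist p.1 p.2) 2 (μ.prod μ))
    (KA KB : X → X → ℝ)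
    (hKA : ∀ x s, KA x s = -(1/2) * (dist x s)^2)
    (hKB : ∀ x s, KB x s =
      KA x s - (∫ w, KA w s ∂μ) - (∫ z, KA x z ∂μ) + ∫ w, ∫ z, KA w z ∂μ ∂μ) :
    (∃ F : X → lp (fun _ : ℕ => ℝ) 2, Isometry F) ↔
      (∀ f : X → ℝ, MemLp f 2 μ →
        0 ≤ ∫ x, ∫ s, KB x s * f x * f s ∂μ ∂μ) := by
  obtain rfl : KA = fun x s => -(1 / 2) * dist x s ^ 2 := funext₂ hKA
  obtain rfl : KB = doublyCentered μ _ := funext₂ hKB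
  have := secondCountableTopology_of_isOpenPosMeasure μ
  have hd := memLp_dist_of_memLp_prod two_ne_zero ENNReal.ofNat_ne_top hdL2
  constructor
  · rintro ⟨F, hF⟩
    obtain ⟨x⟩ := μ.nonempty_of_neZero
    have hF₂ : MemLp F 2 μ := memLp_of_lipschitzWith hF.lipschitz (hd x)
    simp_rw [← hF.dist_eq, dist_eq_norm, doublyCentered_norm_sub_sq hF₂]
    exact isPosSemidefOnL2_inner (hF₂.sub (memLp_const _))
  · intro hK
    have hcomm (x s : X) : -(1 / 2) * dist x s ^ 2 = -(1 / 2) * dist s x ^ 2 := by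
      rw [dist_comm]
    have hcont : Continuous (uncurry (doublyCentered μ fun x s => -(1 / 2) * dist x s ^ 2)) := by
      refine continuous_doublyCentered hcomm (by fun_prop) ?_
      simp_rw [integral_const_mul]
      exact (continuous_integral_dist_sq hd).const_mul _
    refine exists_isometry_l2
      (posSemidef_of_isPosSemidefOnL2 hcont (doublyCentered_comm hcomm) hK) fun x s => ?_
    rw [doublyCentered_self_add_self_sub hcomm, dist_self, dist_self]
    ring

/-- **Theorem.**  A metric measure space `(X, d, μ)` (compact, with a fully
supported Borel probability measure, `d ∈ L²(μ ⊗ μ)`) embeds isometrically into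
`ℓ²` if and only if the doubly centered integral operator `T_{K_B}` is positive
semi-definite on `L²(X, μ)`. -/
theorem metric_measure_space_euclidean_iff_posSemidef
    {X : Type*} [MetricSpace X] [CompactSpace X]
    [MeasurableSpace X] [BorelSpace X]
    (μ : Measure X) [IsProbabilityMeasure μ] [μ.IsOpenPosMeasure]
    (hdL2 : MemLp (fun p : X × X => dist p.1 p.2) 2 (μ.prod μ))
    (KA KB : X → X → ℝ)
    (hKA : ∀ x s, KA x s = -(1/2) * (dist x s)^2)
    (hKB : ∀ x s, KB x s =
      KA x s - (∫ w, KA w s ∂μ) - (∫ z, KA x z ∂μ) + ∫ w, ∫ z, KA w z ∂μ ∂μ) :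
    (∃ F : X → lp (fun _ : ℕ => ℝ) 2, Isometry F) ↔
      (∀ f : X → ℝ, MemLp f 2 μ →
        0 ≤ ∫ x, ∫ s, KB x s * f x * f s ∂μ ∂μ) := by
  exact metric_measure_space_euclidean_iff_posSemidef_general μ hdL2 KA KB hKA hKB
end

section
/- Let (X, μ) be a probability measure space and let K_B ∈ L²(X × X, μ ⊗ μ) be a symmetric kernel admitting a spectral decomposition K_B(x, s) = Σ_{i=1}^∞ λ_i φ_i(x) φ_i(s) in L²(μ ⊗ μ), where λ_i ∈ ℝ with Σ λ_i² < ∞ and {φ_i} is an orthonormal system in L²(X, μ). Define K_B̂(x, s) = Σ_i max(λ_i, 0) φ_i(x) φ_i(s). Then for every symmetric positive semi-definite kernel K' ∈ L²(X × X, μ ⊗ μ) (meaning ∫∫ K'(x, s) f(x) f(s) dμ dμ ≥ 0 for all f ∈ L²(μ)), the strain satisfies ∫_X ∫_X (K_B(x, s) - K'(x, s))² μ(dx) μ(ds) ≥ Σ_i (min(λ_i, 0))², with equality attained at K' = K_B̂. In other words, the strain is minimized over all positive semi-definite kernels by the kernel of the MDS embedding. -/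
open MeasureTheory Filter

/-!
The rank-one kernels `φᵢ ⊗ φᵢ` are orthonormal in `L²(μ ⊗ μ)`, and the coefficient of a positive
semi-definite kernel `K'` along `φᵢ ⊗ φᵢ` is the value of its quadratic form at `φᵢ`, hence
nonnegative. Bessel's inequality for `K_B - K'` therefore bounds the strain below by the sum of the
squared distances from `λᵢ` to `[0, ∞)`, which are `(min λᵢ 0)²`. Truncating every `λᵢ` at `0`
attains all these distances at once.
-/

section Orthonormal

variable {ι 𝕜 H : Type*} [RCLike 𝕜] [NormedAddCommGroup H] [InnerProductSpace 𝕜 H]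
  {e : ι → H} {c : ι → 𝕜} {v : H}

lemma inner_eq_of_hasSum_smul_of_orthonormal {L : SummationFilter ι} [L.LeAtTop] [L.NeBot]
    (he : Orthonormal 𝕜 e) (hv : HasSum (fun i ↦ c i • e i) v L) (j : ι) :
    inner 𝕜 (e j) v = c j := by
  have hzero (i : ι) (hij : i ≠ j) : inner 𝕜 (e j) (c i • e i) = 0 := by
    rw [inner_smul_right, he.inner_eq_zero hij.symm, mul_zero]
  simpa [inner_smul_right, he.norm_eq_one j] using
    (hv.mapL (innerSL 𝕜 (e j))).unique (hasSum_single j hzero L)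

lemma summable_smul_iff_of_orthonormal [CompleteSpace H] (he : Orthonormal 𝕜 e) :
    Summable (fun i ↦ c i • e i) ↔ Summable (fun i ↦ ‖c i‖ ^ 2) := by
  simpa using he.orthogonalFamily.summable_iff_norm_sq_summable c

lemma hasSum_norm_sq_of_hasSum_smul_of_orthonormal
    (he : Orthonormal 𝕜 e) (hv : HasSum (fun i ↦ c i • e i) v) :
    HasSum (fun i ↦ ‖c i‖ ^ 2) (‖v‖ ^ 2) := by
  have hcoeff (i : ι) : inner 𝕜 v (c i • e i) = ((‖c i‖ ^ 2 : ℝ) : 𝕜) := by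
    rw [inner_smul_right, ← inner_conj_symm, inner_eq_of_hasSum_smul_of_orthonormal he hv,
      RCLike.mul_conj, RCLike.ofReal_pow]
  simpa only [innerSL_apply_apply, hcoeff, RCLike.reCLM_apply, RCLike.ofReal_re,
    inner_self_eq_norm_sq] using (hv.mapL (innerSL 𝕜 v)).mapL RCLike.reCLM

lemma summable_norm_sq_of_hasSum_smul_of_orthonormal {L : SummationFilter ι} [L.LeAtTop] [L.NeBot]
    (he : Orthonormal 𝕜 e) (hv : HasSum (fun i ↦ c i • e i) v L) :
    Summable (fun i ↦ ‖c i‖ ^ 2) := by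
  simpa only [inner_eq_of_hasSum_smul_of_orthonormal he hv] using he.inner_products_summable v

lemma hasSum_smul_unconditional_of_orthonormal [CompleteSpace H]
    {L : SummationFilter ι} [L.LeAtTop] [L.NeBot]
    (he : Orthonormal 𝕜 e) (hv : HasSum (fun i ↦ c i • e i) v L) :
    HasSum (fun i ↦ c i • e i) v := by
  have hsum := ((summable_smul_iff_of_orthonormal he).2
    (summable_norm_sq_of_hasSum_smul_of_orthonormal he hv)).hasSum
  have hL : HasSum (fun i ↦ c i • e i) (∑' i, c i • e i) L := hsum.mono_left L.le_atTop
  rwa [hv.unique hL]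

end Orthonormal

section NonnegativeCoefficients

variable {ι H : Type*} [NormedAddCommGroup H] [InnerProductSpace ℝ H] {e : ι → H}

lemma sq_min_zero_le_sq_sub {R : Type*} [CommRing R] [LinearOrder R] [IsStrictOrderedRing R]
    {a b : R} (hb : 0 ≤ b) : min a 0 ^ 2 ≤ (a - b) ^ 2 := by
  rcases le_total a 0 with ha | ha
  · rw [min_eq_left ha]
    nlinarith
  · simpa [ha] using sq_nonneg (a - b)

lemma tsum_sq_min_inner_zero_le_norm_sub_sq (he : Orthonormal ℝ e) (v : H) {w : H}
    (hw : ∀ i, 0 ≤ inner ℝ (e i) w) :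
    ∑' i, min (inner ℝ (e i) v) 0 ^ 2 ≤ ‖v - w‖ ^ 2 := by
  have hle (i : ι) : min (inner ℝ (e i) v) 0 ^ 2 ≤ ‖inner ℝ (e i) (v - w)‖ ^ 2 := by
    rw [inner_sub_right, Real.norm_eq_abs, sq_abs]
    exact sq_min_zero_le_sq_sub (hw i)
  have hbessel := he.inner_products_summable (v - w)
  have hsum := Summable.of_nonneg_of_le (fun i ↦ sq_nonneg _) hle hbessel
  exact (hsum.tsum_le_tsum hle hbessel).trans (he.tsum_inner_products_le (v - w))

lemma norm_sub_sq_eq_tsum_sq_min_zero (he : Orthonormal ℝ e) {c : ι → ℝ} {v w : H}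
    (hv : HasSum (fun i ↦ c i • e i) v) (hw : HasSum (fun i ↦ max (c i) 0 • e i) w) :
    ‖v - w‖ ^ 2 = ∑' i, min (c i) 0 ^ 2 := by
  have hcoeff (i : ι) : c i - max (c i) 0 = min (c i) 0 := by
    linarith [min_add_max (c i) 0]
  have hvw : HasSum (fun i ↦ min (c i) 0 • e i) (v - w) := by
    simpa only [← sub_smul, hcoeff] using hv.sub hw
  simpa only [Real.norm_eq_abs, sq_abs] using
    (hasSum_norm_sq_of_hasSum_smul_of_orthonormal he hvw).tsum_eq.symm

lemma summable_max_zero_smul_of_orthonormal [CompleteSpace H] (he : Orthonormal ℝ e) {c : ι → ℝ}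
    (hc : Summable (fun i ↦ c i • e i)) : Summable (fun i ↦ max (c i) 0 • e i) := by
  rw [summable_smul_iff_of_orthonormal he] at hc ⊢
  refine hc.of_nonneg_of_le (fun i ↦ sq_nonneg _) fun i ↦ ?_
  gcongr
  simpa using abs_max_sub_max_le_abs (c i) 0 0

end NonnegativeCoefficients

section RealL2

variable {Y : Type*} [MeasurableSpace Y] {ν : Measure Y}

lemma norm_sub_sq_eq_integral_sq_sub {u v : Lp ℝ 2 ν} {F G : Y → ℝ} (hu : u =ᵐ[ν] F)
    (hv : v =ᵐ[ν] G) : ‖u - v‖ ^ 2 = ∫ y, (F y - G y) ^ 2 ∂ν := by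
  rw [← real_inner_self_eq_norm_sq, L2.inner_def]
  refine integral_congr_ae ?_
  filter_upwards [Lp.coeFn_sub u v, hu, hv] with y hsub hF hG
  rw [hsub, Pi.sub_apply, hF, hG, real_inner_self_eq_norm_sq, Real.norm_eq_abs, sq_abs]

lemma tendsto_integral_sq_sub_iff {κ : Type*} {l : Filter κ} {u : κ → Lp ℝ 2 ν} {v : Lp ℝ 2 ν}
    {F : κ → Y → ℝ} {G : Y → ℝ} (hu : ∀ n, u n =ᵐ[ν] F n) (hv : v =ᵐ[ν] G) :
    Tendsto (fun n ↦ ∫ y, (G y - F n y) ^ 2 ∂ν) l (nhds 0) ↔ Tendsto u l (nhds v) := by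
  simp only [← fun n ↦ norm_sub_sq_eq_integral_sq_sub hv (hu n), norm_sub_rev v]
  rw [tendsto_iff_norm_sub_tendsto_zero (f := u)]
  exact ⟨fun h ↦ by simpa using h.sqrt, fun h ↦ by simpa using h.pow 2⟩

lemma orthonormal_toLp_iff {ι : Type*} [DecidableEq ι] {φ : ι → Y → ℝ}
    (hφ : ∀ i, MemLp (φ i) 2 ν) :
    Orthonormal ℝ (fun i ↦ (hφ i).toLp (φ i)) ↔
      ∀ i j, ∫ y, φ i y * φ j y ∂ν = if i = j then 1 else 0 := by
  have hinner (i j : ι) :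
      inner ℝ ((hφ i).toLp (φ i)) ((hφ j).toLp (φ j)) = ∫ y, φ i y * φ j y ∂ν := by
    rw [L2.inner_def]
    refine integral_congr_ae ?_
    filter_upwards [(hφ i).coeFn_toLp, (hφ j).coeFn_toLp] with y hi hj
    simp [hi, hj, mul_comm]
  simp only [orthonormal_iff_ite, hinner]

end RealL2

section Tensor

variable {X Y 𝕜 : Type*} [RCLike 𝕜] [MeasurableSpace X] [MeasurableSpace Y]
  {μ : Measure X} {ν : Measure Y}

lemma memLp_two_tensor {f : X → 𝕜} {g : Y → 𝕜} (hf : MemLp f 2 μ) (hg : MemLp g 2 ν) :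
    MemLp (fun p : X × Y ↦ f p.1 * g p.2) 2 (μ.prod ν) := by
  refine (memLp_two_iff_integrable_sq_norm (hf.1.comp_fst.mul hg.1.comp_snd)).2 ?_
  simpa only [Pi.mul_apply, norm_mul, mul_pow] using
    hf.norm.integrable_sq.mul_prod hg.norm.integrable_sq

/-- The tensor product `f ⊗ g ∈ L²(μ ⊗ ν)` of two square-integrable functions, that is, the
rank-one kernel `(x, y) ↦ f x * g y`. -/
noncomputable def lpTensor (f : Lp 𝕜 2 μ) (g : Lp 𝕜 2 ν) : Lp 𝕜 2 (μ.prod ν) :=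
  (memLp_two_tensor (Lp.memLp f) (Lp.memLp g)).toLp _

lemma coeFn_lpTensor (f : Lp 𝕜 2 μ) (g : Lp 𝕜 2 ν) :
    lpTensor f g =ᵐ[μ.prod ν] fun p ↦ f p.1 * g p.2 :=
  MemLp.coeFn_toLp _

lemma coeFn_lpTensor_toLp {f : X → 𝕜} {g : Y → 𝕜} (hf : MemLp f 2 μ) (hg : MemLp g 2 ν) :
    lpTensor (hf.toLp f) (hg.toLp g) =ᵐ[μ.prod ν] fun p ↦ f p.1 * g p.2 := by
  filter_upwards [coeFn_lpTensor (hf.toLp f) (hg.toLp g),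
    Measure.quasiMeasurePreserving_fst.ae hf.coeFn_toLp,
    Measure.quasiMeasurePreserving_snd.ae hg.coeFn_toLp] with p hp hfp hgp
  rw [hp, hfp, hgp]

lemma coeFn_sum_smul_lpTensor_toLp {ι : Type*} {φ : ι → X → 𝕜} {ψ : ι → Y → 𝕜}
    (hφ : ∀ i, MemLp (φ i) 2 μ) (hψ : ∀ i, MemLp (ψ i) 2 ν) (c : ι → 𝕜) (s : Finset ι) :
    (∑ i ∈ s, c i • lpTensor ((hφ i).toLp (φ i)) ((hψ i).toLp (ψ i)) : Lp 𝕜 2 (μ.prod ν))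
      =ᵐ[μ.prod ν] fun p ↦ ∑ i ∈ s, c i * φ i p.1 * ψ i p.2 := by
  have hterm (i : ι) : ∀ᵐ p ∂(μ.prod ν),
      (c i • lpTensor ((hφ i).toLp (φ i)) ((hψ i).toLp (ψ i)) : Lp 𝕜 2 (μ.prod ν)) p =
        c i * φ i p.1 * ψ i p.2 := by
    filter_upwards [Lp.coeFn_smul (c i) (lpTensor ((hφ i).toLp (φ i)) ((hψ i).toLp (ψ i))),
      coeFn_lpTensor_toLp (hφ i) (hψ i)] with p hsmul htensor
    rw [hsmul, Pi.smul_apply, htensor, smul_eq_mul, mul_assoc]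
  filter_upwards [Lp.coeFn_finsetSum s
      fun i ↦ c i • lpTensor ((hφ i).toLp (φ i)) ((hψ i).toLp (ψ i)),
    s.eventually_all.2 fun i _ ↦ hterm i] with p hsum hp
  rw [hsum, Finset.sum_apply]
  exact Finset.sum_congr rfl hp

variable [SFinite μ] [SFinite ν]

lemma inner_lpTensor (f f' : Lp 𝕜 2 μ) (g g' : Lp 𝕜 2 ν) :
    inner 𝕜 (lpTensor f g) (lpTensor f' g') = inner 𝕜 f f' * inner 𝕜 g g' := by
  simp only [L2.inner_def, ← integral_prod_mul]
  refine integral_congr_ae ?_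
  filter_upwards [coeFn_lpTensor f g, coeFn_lpTensor f' g'] with p h h'
  simp only [h, h', RCLike.inner_apply, map_mul]
  ring

lemma orthonormal_lpTensor {ι κ : Type*} {u : ι → Lp 𝕜 2 μ} {w : κ → Lp 𝕜 2 ν}
    (hu : Orthonormal 𝕜 u) (hw : Orthonormal 𝕜 w) :
    Orthonormal 𝕜 (fun i : ι × κ ↦ lpTensor (u i.1) (w i.2)) := by
  classical
  rw [orthonormal_iff_ite] at hu hw ⊢
  intro i j
  simp only [inner_lpTensor, hu, hw, Prod.ext_iff, ite_and, ite_mul, one_mul, zero_mul]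

lemma orthonormal_lpTensor_self {ι : Type*} {u : ι → Lp 𝕜 2 μ} (hu : Orthonormal 𝕜 u) :
    Orthonormal 𝕜 (fun i ↦ lpTensor (u i) (u i)) :=
  (orthonormal_lpTensor hu hu).comp (fun i ↦ (i, i)) fun _ _ h ↦ (Prod.ext_iff.1 h).1

lemma compMeasurePreserving_swap_lpTensor (f : Lp 𝕜 2 μ) (g : Lp 𝕜 2 ν) :
    Lp.compMeasurePreserving Prod.swap Measure.measurePreserving_swap (lpTensor f g) =
      lpTensor g f := by
  simp only [lpTensor, Lp.toLp_compMeasurePreserving]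
  refine MemLp.toLp_congr _ _ (.of_forall fun p ↦ ?_)
  simp [mul_comm]

lemma swap_ae_eq_of_hasSum_smul_lpTensor_self {ι : Type*} {u : ι → Lp 𝕜 2 μ} {c : ι → 𝕜}
    {v : Lp 𝕜 2 (μ.prod μ)} (hv : HasSum (fun i ↦ c i • lpTensor (u i) (u i)) v) :
    ∀ᵐ p ∂(μ.prod μ), v p.swap = v p := by
  let swap := Lp.compMeasurePreservingₗᵢ 𝕜 (E := 𝕜) (p := 2) Prod.swap
    (Measure.measurePreserving_swap (μ := μ) (ν := μ))
  have hfix (i : ι) : swap (lpTensor (u i) (u i)) = lpTensor (u i) (u i) :=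
    compMeasurePreserving_swap_lpTensor (u i) (u i)
  have hswap : swap v = v := by
    refine (hv.mapL swap.toContinuousLinearMap).unique ?_
    simpa [hfix] using hv
  filter_upwards [Lp.coeFn_compMeasurePreserving v Measure.measurePreserving_swap] with p hp
  rw [← Function.comp_apply (f := v), ← hp]
  exact congrArg (fun w : Lp 𝕜 2 (μ.prod μ) ↦ w p) hswap

end Tensor

lemma exists_symm_ae_eq {α E : Type*} [MeasurableSpace α] [AddCommGroup E] [Module ℝ E]
    {ρ : Measure (α × α)} {F : α × α → E} (hF : ∀ᵐ p ∂ρ, F p.swap = F p) :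
    ∃ K : α × α → E, (∀ x s, K (x, s) = K (s, x)) ∧ F =ᵐ[ρ] K := by
  refine ⟨fun p ↦ (2⁻¹ : ℝ) • (F p + F p.swap), fun x s ↦ by simp [add_comm], ?_⟩
  filter_upwards [hF] with p hp
  rw [hp, ← two_smul ℝ, inv_smul_smul₀ two_ne_zero]

section Kernel

variable {X Y : Type*} [MeasurableSpace X] [MeasurableSpace Y] {μ : Measure X} {ν : Measure Y}

lemma inner_lpTensor_toLp_eq_integral [SFinite μ] [SFinite ν]
    {K : X × Y → ℝ} {f : X → ℝ} {g : Y → ℝ} {v : Lp ℝ 2 (μ.prod ν)} (hv : v =ᵐ[μ.prod ν] K)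
    (hf : MemLp f 2 μ) (hg : MemLp g 2 ν) :
    inner ℝ (lpTensor (hf.toLp f) (hg.toLp g)) v =
      ∫ x, ∫ y, K (x, y) * f x * g y ∂ν ∂μ := by
  have hK : MemLp K 2 (μ.prod ν) := (memLp_congr_ae hv).1 (Lp.memLp v)
  simp only [mul_assoc]
  rw [L2.inner_def, ← integral_prod (fun p ↦ K p * (f p.1 * g p.2))
    (hK.integrable_mul (memLp_two_tensor hf hg))]
  refine integral_congr_ae ?_
  filter_upwards [hv, coeFn_lpTensor_toLp hf hg] with p hKp hfg
  simp [hKp, hfg]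

lemma hasSum_smul_lpTensor_iff_tendsto_integral {φ : ℕ → X → ℝ} {ψ : ℕ → Y → ℝ}
    (hφ : ∀ i, MemLp (φ i) 2 μ) (hψ : ∀ i, MemLp (ψ i) 2 ν) (c : ℕ → ℝ)
    {K : X × Y → ℝ} {v : Lp ℝ 2 (μ.prod ν)} (hv : v =ᵐ[μ.prod ν] K) :
    HasSum (fun i ↦ c i • lpTensor ((hφ i).toLp (φ i)) ((hψ i).toLp (ψ i))) v (.conditional ℕ) ↔
      Tendsto (fun N ↦ ∫ p, (K p - ∑ i ∈ Finset.range N, c i * φ i p.1 * ψ i p.2) ^ 2 ∂(μ.prod ν))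
        atTop (nhds 0) := by
  rw [HasSum, SummationFilter.conditional_filter_eq_map_range, tendsto_map'_iff]
  exact (tendsto_integral_sq_sub_iff
    (fun N ↦ coeFn_sum_smul_lpTensor_toLp hφ hψ c (Finset.range N)) hv).symm

lemma inner_lpTensor_self_nonneg_of_hasSum [SFinite μ] {ι : Type*} {u : ι → Lp ℝ 2 μ} {c : ι → ℝ}
    {v : Lp ℝ 2 (μ.prod μ)} (hc : ∀ i, 0 ≤ c i)
    (hv : HasSum (fun i ↦ c i • lpTensor (u i) (u i)) v) (f : Lp ℝ 2 μ) :
    0 ≤ inner ℝ (lpTensor f f) v := by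
  refine (hv.mapL (innerSL ℝ (lpTensor f f))).nonneg fun i ↦ ?_
  simpa [inner_smul_right, inner_lpTensor] using mul_nonneg (hc i) (mul_self_nonneg _)

end Kernel

theorem infinite_mds_strain_minimization_general
    {X : Type*} [MeasurableSpace X] (μ : Measure X) [SFinite μ]
    (KB : X × X → ℝ) (hKBL2 : MemLp KB 2 (μ.prod μ))
    (lam : ℕ → ℝ) (φ : ℕ → X → ℝ) (hφL2 : ∀ i, MemLp (φ i) 2 μ)
    (hortho : ∀ i j : ℕ, ∫ x, φ i x * φ j x ∂μ = if i = j then 1 else 0)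
    (hdecomp : Tendsto
      (fun N : ℕ ↦ ∫ p, (KB p - ∑ i ∈ Finset.range N, lam i * φ i p.1 * φ i p.2) ^ 2 ∂(μ.prod μ))
      atTop (nhds 0)) :
    (∀ K' : X × X → ℝ, MemLp K' 2 (μ.prod μ) →
      (∀ f : X → ℝ, MemLp f 2 μ → 0 ≤ ∫ x, ∫ s, K' (x, s) * f x * f s ∂μ ∂μ) →
      (∑' i : ℕ, (min (lam i) 0) ^ 2) ≤ ∫ p, (KB p - K' p) ^ 2 ∂(μ.prod μ)) ∧
    (∃ Khat : X × X → ℝ, MemLp Khat 2 (μ.prod μ) ∧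
      (∀ x s : X, Khat (x, s) = Khat (s, x)) ∧
      (∀ f : X → ℝ, MemLp f 2 μ → 0 ≤ ∫ x, ∫ s, Khat (x, s) * f x * f s ∂μ ∂μ) ∧
      Tendsto
        (fun N : ℕ ↦ ∫ p, (Khat p - ∑ i ∈ Finset.range N,
          max (lam i) 0 * φ i p.1 * φ i p.2) ^ 2 ∂(μ.prod μ))
        atTop (nhds 0) ∧
      ∫ p, (KB p - Khat p) ^ 2 ∂(μ.prod μ) = ∑' i : ℕ, (min (lam i) 0) ^ 2) := by
  have he := orthonormal_lpTensor_self ((orthonormal_toLp_iff hφL2).2 hortho)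
  have hKB := hasSum_smul_unconditional_of_orthonormal he
    ((hasSum_smul_lpTensor_iff_tendsto_integral hφL2 hφL2 lam hKBL2.coeFn_toLp).2 hdecomp)
  refine ⟨fun K' hK' hpsd ↦ ?_, ?_⟩
  · rw [← norm_sub_sq_eq_integral_sq_sub hKBL2.coeFn_toLp hK'.coeFn_toLp]
    simpa only [inner_eq_of_hasSum_smul_of_orthonormal he hKB] using
      tsum_sq_min_inner_zero_le_norm_sub_sq he (hKBL2.toLp KB) fun i ↦
        (hpsd _ (hφL2 i)).trans_eq (inner_lpTensor_toLp_eq_integral hK'.coeFn_toLp _ _).symm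
  · obtain ⟨v, hv⟩ := summable_max_zero_smul_of_orthonormal he hKB.summable
    obtain ⟨Khat, hsymm, hKhat⟩ := exists_symm_ae_eq (swap_ae_eq_of_hasSum_smul_lpTensor_self hv)
    refine ⟨Khat, (memLp_congr_ae hKhat).1 (Lp.memLp v), hsymm, fun f hf ↦ ?_, ?_, ?_⟩
    · rw [← inner_lpTensor_toLp_eq_integral hKhat hf hf]
      exact inner_lpTensor_self_nonneg_of_hasSum (fun i ↦ le_max_right _ _) hv _
    · exact (hasSum_smul_lpTensor_iff_tendsto_integral hφL2 hφL2 _ hKhat).1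
        (hv.mono_left (SummationFilter.conditional ℕ).le_atTop)
    · rw [← norm_sub_sq_eq_integral_sq_sub hKBL2.coeFn_toLp hKhat]
      exact norm_sub_sq_eq_tsum_sq_min_zero he hKB hv

/-- **Theorem (strain minimization for infinite MDS).**  Let `K_B` be a
symmetric `L²` kernel with spectral decomposition `K_B = ∑ᵢ λᵢ φᵢ ⊗ φᵢ`
(converging in `L²(μ ⊗ μ)`, with `∑ λᵢ² < ∞` and `φᵢ` orthonormal).  Then the
strain `∫∫ (K_B − K')² dμ dμ` over all symmetric positive semi-definite `L²`
kernels `K'` is at least `∑ᵢ (min(λᵢ, 0))²`, and this bound is attained at the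
kernel `K_B̂ = ∑ᵢ max(λᵢ, 0) φᵢ ⊗ φᵢ` of the MDS embedding. -/
theorem infinite_mds_strain_minimization
    {X : Type*} [MeasurableSpace X] (μ : Measure X) [IsProbabilityMeasure μ]
    (KB : X × X → ℝ) (hKBL2 : MemLp KB 2 (μ.prod μ))
    (hKBsymm : ∀ x s : X, KB (x, s) = KB (s, x))
    (lam : ℕ → ℝ) (hsq : Summable (fun i => (lam i)^2))
    (φ : ℕ → X → ℝ) (hφL2 : ∀ i, MemLp (φ i) 2 μ)
    (hortho : ∀ i j : ℕ, ∫ x, φ i x * φ j x ∂μ = if i = j then 1 else 0)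
    (hdecomp : Tendsto
      (fun N : ℕ => ∫ p, (KB p - ∑ i ∈ Finset.range N, lam i * φ i p.1 * φ i p.2)^2 ∂(μ.prod μ))
      atTop (nhds 0)) :
    (∀ K' : X × X → ℝ, MemLp K' 2 (μ.prod μ) →
      (∀ x s : X, K' (x, s) = K' (s, x)) →
      (∀ f : X → ℝ, MemLp f 2 μ → 0 ≤ ∫ x, ∫ s, K' (x, s) * f x * f s ∂μ ∂μ) →
      (∑' i : ℕ, (min (lam i) 0)^2) ≤ ∫ p, (KB p - K' p)^2 ∂(μ.prod μ)) ∧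
    (∃ Khat : X × X → ℝ, MemLp Khat 2 (μ.prod μ) ∧
      (∀ x s : X, Khat (x, s) = Khat (s, x)) ∧
      (∀ f : X → ℝ, MemLp f 2 μ → 0 ≤ ∫ x, ∫ s, Khat (x, s) * f x * f s ∂μ ∂μ) ∧
      Tendsto
        (fun N : ℕ => ∫ p, (Khat p - ∑ i ∈ Finset.range N, max (lam i) 0 * φ i p.1 * φ i p.2)^2 ∂(μ.prod μ))
        atTop (nhds 0) ∧
      ∫ p, (KB p - Khat p)^2 ∂(μ.prod μ) = ∑' i : ℕ, (min (lam i) 0)^2) := by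
  exact (infinite_mds_strain_minimization_general μ KB hKBL2 lam φ hφL2 hortho hdecomp).imp_left
    fun hbound K' hK' _ ↦ hbound K' hK'
end
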